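/- Consider any run of the multi-level quota method (with arbitrary tie-breaking) on a multi-level apportionment instance. For every h ≥ 0, after h seats have been allocated, for any two nodes p and c such that c is a child of p, it holds that (V^h_c + 1)/R_c ≥ (V^h_p + 1)/R_p. -/

import Mathlib

/-- A multi-level apportionment instance: a rooted tree on nodes `0, …, n`
(root `0`, encoded by a parent function with `parent i < i` for `i ≠ 0`),
together with entitlements `W`. -/
structure MLA where
  n : ℕ
  parent : Fin (n + 1) → Fin (n + 1)
  parent_lt : ∀ i : Fin (n + 1), i ≠ 0 → (parent i : ℕ) < (i : ℕ)
  W : Fin (n + 1) → ℝ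
  W_pos : ∀ i, 0 < W i
  W_le_one : ∀ i, W i ≤ 1
  W_root : W 0 = 1
  W_sum : ∀ i : Fin (n + 1),
    (Finset.univ.filter (fun c => c ≠ 0 ∧ parent c = i)).Nonempty →
    ∑ c ∈ Finset.univ.filter (fun c => c ≠ 0 ∧ parent c = i), W c = 1

namespace MLA

variable (T : MLA)

/-- The set of children of node `i`. -/
def children (i : Fin (T.n + 1)) : Finset (Fin (T.n + 1)) :=
  Finset.univ.filter (fun c => c ≠ 0 ∧ T.parent c = i)

/-- The ancestor set `A(i)`: `A(0) = {0}` and `A(i) = {parent i} ∪ A(parent i)`. -/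
def ancestors (i : Fin (T.n + 1)) : Finset (Fin (T.n + 1)) :=
  if h : i = 0 then {0} else insert (T.parent i) (ancestors (T.parent i))
termination_by (i : ℕ)
decreasing_by exact T.parent_lt i h

/-- The entitlement of node `i` relative to the root: `R i = ∏_{a ∈ A(i) ∪ {i}} W a`. -/
def R (i : Fin (T.n + 1)) : ℝ := ∏ a ∈ insert i (T.ancestors i), T.W a

/-- `V` is an allocation of `h` seats. -/
def IsAlloc (h : ℕ) (V : Fin (T.n + 1) → ℕ) : Prop :=
  V 0 = h ∧ ∀ i, (T.children i).Nonempty → V i = ∑ c ∈ T.children i, V c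

/-- `V` fulfills lower quota: `V i ≥ LQ i = max_{a ∈ A(i)} ⌊(R i / R a) · V a⌋`. -/
def FulfillsLowerQuota (V : Fin (T.n + 1) → ℕ) : Prop :=
  ∀ i, ∀ a ∈ T.ancestors i, ⌊T.R i / T.R a * (V a : ℝ)⌋ ≤ (V i : ℤ)

/-- `V` fulfills upper quota: `V i ≤ UQ i = min_{a ∈ A(i)} ⌈(R i / R a) · V a⌉`. -/
def FulfillsUpperQuota (V : Fin (T.n + 1) → ℕ) : Prop :=
  ∀ i, ∀ a ∈ T.ancestors i, (V i : ℤ) ≤ ⌈T.R i / T.R a * (V a : ℝ)⌉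


/-- `P` is the set of nodes receiving the new seat in one step of an iterative
method with selection criterion `crit` (to be minimized among children) and
eligibility constraint `elig`: `P` is a root-to-leaf path, each non-root node on
the path is an eligible child of its parent minimizing `crit` among all eligible
children, and the seat counts along `P` each increase by one. -/
def IsStepWith (crit : (Fin (T.n + 1) → ℕ) → Fin (T.n + 1) → ℝ)
    (elig : (Fin (T.n + 1) → ℕ) → Fin (T.n + 1) → Prop)
    (P : Finset (Fin (T.n + 1))) (Vh Vh1 : Fin (T.n + 1) → ℕ) : Prop :=
  (0 : Fin (T.n + 1)) ∈ P ∧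
  (∀ i ∈ P, i ≠ 0 → T.parent i ∈ P) ∧
  (∀ i ∈ P, (T.children i).Nonempty → ∃ c ∈ T.children i, c ∈ P) ∧
  (∀ c ∈ P, ∀ d ∈ P, c ≠ 0 → d ≠ 0 → T.parent c = T.parent d → c = d) ∧
  (∀ c ∈ P, c ≠ 0 → elig Vh c ∧
    ∀ d ∈ T.children (T.parent c), elig Vh d → crit Vh c ≤ crit Vh d) ∧
  (∀ i, Vh1 i = Vh i + if i ∈ P then 1 else 0)

/-- `V : ℕ → (nodes → ℕ)` is a run of the iterative method given by `crit` and
`elig` (with arbitrary tie-breaking): `V 0` is the all-zero allocation and each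
`V (h+1)` is obtained from `V h` by allocating one more seat along a path. -/
def IsRun (crit : (Fin (T.n + 1) → ℕ) → Fin (T.n + 1) → ℝ)
    (elig : (Fin (T.n + 1) → ℕ) → Fin (T.n + 1) → Prop)
    (V : ℕ → Fin (T.n + 1) → ℕ) : Prop :=
  (∀ i, V 0 i = 0) ∧ ∀ h, ∃ P, T.IsStepWith crit elig P (V h) (V (h + 1))

/-- Adams' criterion: a child `c` minimizing `V c / R c` receives the seat. -/
noncomputable def adamsCrit (V : Fin (T.n + 1) → ℕ) (c : Fin (T.n + 1)) : ℝ :=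
  (V c : ℝ) / T.R c

/-- Jefferson's criterion: a child `c` minimizing `(V c + 1) / R c` receives the seat. -/
noncomputable def jeffersonCrit (V : Fin (T.n + 1) → ℕ) (c : Fin (T.n + 1)) : ℝ :=
  ((V c : ℝ) + 1) / T.R c

/-- Trivial eligibility constraint: every child is eligible. -/
def trivElig (_ : Fin (T.n + 1) → ℕ) (_ : Fin (T.n + 1)) : Prop := True

/-- Eligibility constraint of the quota method: `V c / W c < V (parent c) + 1`. -/
def quotaElig (V : Fin (T.n + 1) → ℕ) (c : Fin (T.n + 1)) : Prop :=
  (V c : ℝ) / T.W c < (V (T.parent c) : ℝ) + 1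

/-- Eligibility constraint of the upper-compliant quota method:
`V c / R c < (V a + 1) / R a` for every ancestor `a` of `c`. -/
def ucElig (V : Fin (T.n + 1) → ℕ) (c : Fin (T.n + 1)) : Prop :=
  ∀ a ∈ T.ancestors c, (V c : ℝ) / T.R c < ((V a : ℝ) + 1) / T.R a

end MLA

namespace MLA

/-- Local (single-level) core argument: an earliest-deadline-first counting argument. -/
lemma local_quota {ι : Type*} (C : Finset ι) (w : ι → ℝ)
    (hw : ∀ e ∈ C, 0 < w e) (hsum : ∑ e ∈ C, w e = 1)
    (v : ℕ → ι → ℕ) (s : ℕ → ℕ) (hv0 : ∀ e ∈ C, v 0 e = 0)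
    (hs : ∀ m, ∑ e ∈ C, v m e = s m)
    (hmono : ∀ m, s m ≤ s (m + 1))
    (hstep : ∀ m, ∀ d ∈ C, v (m + 1) d = v m d ∨
      (v (m + 1) d = v m d + 1 ∧ s (m + 1) = s m + 1 ∧
        (v m d : ℝ) < w d * ((s m : ℝ) + 1) ∧
        ∀ e ∈ C, (v m e : ℝ) < w e * ((s m : ℝ) + 1) →
          ((v m d : ℝ) + 1) / w d ≤ ((v m e : ℝ) + 1) / w e))
    (h : ℕ) (c : ι) (hc : c ∈ C) :
    w c * ((s h : ℝ) + 1) ≤ (v h c : ℝ) + 1 := by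
  by_contra hlt
  push Not at hlt
  have hsR : ∀ m, ∑ e ∈ C, (v m e : ℝ) = (s m : ℝ) := fun m => by
    rw [← hs m]; push_cast; rfl
  have hsmono : Monotone s := monotone_nat_of_le_succ hmono
  have hvmono : ∀ e ∈ C, Monotone (fun m => v m e) := fun e he =>
    monotone_nat_of_le_succ (fun m => by
      rcases hstep m e he with h1 | h1
      · exact h1.ge
      · have := h1.1
        show v m e ≤ v (m + 1) e
        omega)
  let Bad : ℕ → Prop := fun k => k < h ∧ ∃ d ∈ C, v (k + 1) d = v k d + 1 ∧
    w d * ((s h : ℝ) + 1) ≤ (v k d : ℝ) + 1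
  -- after a time `a` with no bad step from `a` on
  have key : ∀ a, (∀ k, a ≤ k → ¬ Bad k) → ∀ e ∈ C, ∀ m, a ≤ m → m ≤ h →
      v m e = v a e ∨ (v m e : ℝ) < w e * ((s h : ℝ) + 1) := by
    intro a ha e he m ham
    induction m, ham using Nat.le_induction with
    | base => intro _; left; rfl
    | succ m ham ih =>
      intro hm
      rcases hstep m e he with h1 | h1
      · rw [h1]; exact ih (by omega)
      · right
        by_contra hcon
        push Not at hcon
        refine ha m ham ⟨by omega, e, he, h1.1, ?_⟩
        rw [h1.1] at hcon
        push_cast at hcon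
        exact hcon
  by_cases hex : ∃ k, Bad k
  · classical
    obtain ⟨k0, hk0⟩ := hex
    have hB : Bad (Nat.findGreatest Bad h) := Nat.findGreatest_spec hk0.1.le hk0
    have hG : ∀ k, Nat.findGreatest Bad h + 1 ≤ k → ¬ Bad k := fun k hk hb =>
      Nat.findGreatest_is_greatest (P := Bad) hk hb.1.le hb
    generalize Nat.findGreatest Bad h = k at hB hG
    obtain ⟨hkh, d, hd, hd1, hd2⟩ := hB
    have hst := hstep k d hd
    rcases hst with h1 | ⟨-, hsk, -, hmin⟩
    · omega
    have hskh : (s k : ℝ) + 1 ≤ s h := by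
      have : s (k + 1) ≤ s h := hsmono hkh
      rw [hsk] at this
      exact_mod_cast this
    -- early-deadline nodes are ineligible at `k`
    have hinel : ∀ e ∈ C, (v k e : ℝ) + 1 < w e * ((s h : ℝ) + 1) →
        w e * ((s k : ℝ) + 1) ≤ v k e := by
      intro e he hlt'
      by_contra hcon
      push Not at hcon
      have h1 := hmin e he hcon
      have h2 : ((v k e : ℝ) + 1) / w e < (s h : ℝ) + 1 := by
        rw [div_lt_iff₀ (hw e he)]; linarith
      have h3 : (s h : ℝ) + 1 ≤ ((v k d : ℝ) + 1) / w d := by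
        rw [le_div_iff₀ (hw d hd)]; linarith
      linarith
    have hcase : ∀ e ∈ C, (v h e : ℝ) - v (k + 1) e < w e * ((s h : ℝ) - s k) := by
      intro e he
      have hpos : 0 < w e * ((s h : ℝ) - s k) := mul_pos (hw e he) (by linarith)
      by_cases heq : v h e = v (k + 1) e
      · rw [heq]; simpa using hpos
      · have h1 := (key (k + 1) hG e he h hkh le_rfl).resolve_left heq
        have h2 : v (k + 1) e ≤ v h e := hvmono e he hkh
        have h3 : v k e ≤ v (k + 1) e := hvmono e he (Nat.le_succ k)
        have h4 : (v k e : ℝ) + 1 ≤ v h e := by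
          have : v k e + 1 ≤ v h e := by omega
          exact_mod_cast this
        have h5 := hinel e he (by linarith)
        have h6 : (v k e : ℝ) ≤ v (k + 1) e := by exact_mod_cast h3
        nlinarith
    have hfin : ∑ e ∈ C, ((v h e : ℝ) + (if e = c then 1 else 0) - v (k + 1) e)
        < ∑ e ∈ C, w e * ((s h : ℝ) - s k) := by
      refine Finset.sum_lt_sum_of_nonempty ⟨c, hc⟩ ?_
      intro e he
      by_cases hec : e = c
      · subst hec
        rw [if_pos rfl]
        have hle : v k e ≤ v h e := hvmono e he hkh.le
        have hle' : (v k e : ℝ) ≤ v h e := by exact_mod_cast hle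
        have h5 := hinel e he (by linarith)
        have h6 : (v k e : ℝ) ≤ v (k + 1) e := by
          have : v k e ≤ v (k + 1) e := hvmono e he (Nat.le_succ k)
          exact_mod_cast this
        nlinarith
      · rw [if_neg hec, add_zero]
        exact hcase e he
    rw [← Finset.sum_mul, hsum, Finset.sum_sub_distrib, Finset.sum_add_distrib, hsR, hsR,
      Finset.sum_ite_eq' C c, if_pos hc, hsk] at hfin
    push_cast at hfin
    linarith
  · push Not at hex
    have h1 : ∀ e ∈ C, (v h e : ℝ) < w e * ((s h : ℝ) + 1) := by
      intro e he
      rcases key 0 (fun k _ => hex k) e he h (Nat.zero_le _) le_rfl with h2 | h2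
      · rw [h2, hv0 e he]
        have := hw e he
        push_cast
        positivity
      · exact h2
    classical
    have hfin : ∑ e ∈ C, ((v h e : ℝ) + (if e = c then 1 else 0))
        < ∑ e ∈ C, w e * ((s h : ℝ) + 1) := by
      refine Finset.sum_lt_sum_of_nonempty ⟨c, hc⟩ ?_
      intro e he
      by_cases hec : e = c
      · subst hec
        rw [if_pos rfl]
        exact hlt
      · rw [if_neg hec, add_zero]
        exact h1 e he
    rw [← Finset.sum_mul, hsum, Finset.sum_add_distrib, hsR,
      Finset.sum_ite_eq' C c, if_pos hc] at hfin
    linarith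

lemma ancestors_le (T : MLA) : ∀ (n : ℕ) (i : Fin (T.n + 1)), (i : ℕ) = n →
    ∀ a ∈ T.ancestors i, (a : ℕ) ≤ (i : ℕ) := by
  intro n
  induction n using Nat.strong_induction_on with
  | _ n ih =>
    intro i hi a ha
    rw [ancestors] at ha
    split_ifs at ha with h0
    · rw [Finset.mem_singleton] at ha
      subst ha; simp
    · have hlt := T.parent_lt i h0
      rw [Finset.mem_insert] at ha
      rcases ha with ha | ha
      · rw [ha]; exact hlt.le
      · exact (ih _ (hi ▸ hlt) (T.parent i) rfl a ha).trans hlt.le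

lemma R_pos (T : MLA) (i : Fin (T.n + 1)) : 0 < T.R i :=
  Finset.prod_pos (fun a _ => T.W_pos a)

lemma R_child (T : MLA) (c : Fin (T.n + 1)) (h0 : c ≠ 0) :
    T.R c = T.W c * T.R (T.parent c) := by
  have hlt := T.parent_lt c h0
  have hA : T.ancestors c = insert (T.parent c) (T.ancestors (T.parent c)) := by
    conv_lhs => rw [ancestors]
    rw [dif_neg h0]
  unfold R
  rw [hA, Finset.prod_insert]
  intro hmem
  rw [Finset.mem_insert] at hmem
  rcases hmem with hmem | hmem
  · rw [← hmem] at hlt; exact lt_irrefl _ hlt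
  · have := ancestors_le T _ (T.parent c) rfl c hmem
    omega

end MLA

/-- In any run of the multi-level quota method, after `h`
seats have been allocated, for any child `c` of a node `p` we have
`(V^h_c + 1)/R_c ≥ (V^h_p + 1)/R_p`. -/
theorem quota_method_child_parent_ratio (T : MLA) (V : ℕ → Fin (T.n + 1) → ℕ)
    (hrun : T.IsRun T.jeffersonCrit T.quotaElig V) (h : ℕ)
    (p c : Fin (T.n + 1)) (hc : c ∈ T.children p) :
    ((V h p : ℝ) + 1) / T.R p ≤ ((V h c : ℝ) + 1) / T.R c := by
  obtain ⟨hz, hsteps⟩ := hrun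
  have memC : ∀ e, e ∈ T.children p ↔ e ≠ 0 ∧ T.parent e = p := by
    intro e; simp [MLA.children]
  have hRp := T.R_pos p
  have hRC : ∀ e ∈ T.children p, T.R e = T.W e * T.R p := by
    intro e he
    have := (memC e).1 he
    rw [T.R_child e this.1, this.2]
  have hsum : ∀ m, ∑ e ∈ T.children p, V m e = V m p := by
    intro m
    induction m with
    | zero => simp [hz]
    | succ m ih =>
      obtain ⟨P, -, hpar, hch, huniq, -, hV⟩ := hsteps m
      simp only [hV]
      rw [Finset.sum_add_distrib, ih]
      congr 1
      by_cases hp : p ∈ P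
      · obtain ⟨d, hd, hdP⟩ := hch p hp ⟨c, hc⟩
        rw [if_pos hp, Finset.sum_eq_single_of_mem d hd, if_pos hdP]
        intro e he hne
        refine if_neg (fun heP => hne ?_)
        have h1 := (memC e).1 he
        have h2 := (memC d).1 hd
        exact huniq e heP d hdP h1.1 h2.1 (h1.2.trans h2.2.symm)
      · rw [if_neg hp]
        refine Finset.sum_eq_zero (fun e he => if_neg (fun heP => hp ?_))
        have h1 := (memC e).1 he
        rw [← h1.2]
        exact hpar e heP h1.1
  have hmain := MLA.local_quota (T.children p) T.W (fun e _ => T.W_pos e)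
    (T.W_sum p ⟨c, hc⟩) V (fun m => V m p) (fun e _ => hz e) hsum
    (fun m => by
      obtain ⟨P, -, -, -, -, -, hV⟩ := hsteps m
      show V m p ≤ V (m + 1) p
      rw [hV p]; exact Nat.le_add_right _ _)
    (by
      intro m d hd
      obtain ⟨P, -, hpar, -, -, hel, hV⟩ := hsteps m
      have h1 := (memC d).1 hd
      by_cases hdP : d ∈ P
      · right
        have hpP : p ∈ P := h1.2 ▸ hpar d hdP h1.1
        obtain ⟨he1, he2⟩ := hel d hdP h1.1
        refine ⟨by rw [hV d, if_pos hdP], by rw [hV p, if_pos hpP], ?_, ?_⟩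
        · unfold MLA.quotaElig at he1
          rw [h1.2, div_lt_iff₀ (T.W_pos d)] at he1
          linarith
        · intro e he hlt
          have h2 := (memC e).1 he
          have h3 := he2 e (h1.2.symm ▸ he) (by
            unfold MLA.quotaElig
            rw [h2.2, div_lt_iff₀ (T.W_pos e)]
            linarith)
          unfold MLA.jeffersonCrit at h3
          rw [hRC d hd, hRC e he, ← div_div, ← div_div] at h3
          exact (div_le_div_iff_of_pos_right hRp).1 h3
      · left
        rw [hV d, if_neg hdP, add_zero])
    h c hc
  rw [hRC c hc, ← div_div]
  refine (div_le_div_iff_of_pos_right hRp).2 ?_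
  rw [le_div_iff₀ (T.W_pos c)]
  linarith
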